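/- Let β ∈ (1,2) with δ(β) = (1^m 0)^∞ for some m ≥ 1, and let t ∈ E_β be such that its greedy β-expansion (t_i) is periodic with minimal period N (i.e., N is the smallest positive integer with σ^N((t_i)) = (t_i)). Then t_1…t_N is a β-Lyndon word; in particular t is the right endpoint t_R of the β-Lyndon interval generated by t_1…t_N. -/

import Mathlib

open Set Filter MeasureTheory

/-- The β-transformation `x ↦ βx (mod 1)`. -/
noncomputable def Tbeta (β x : ℝ) : ℝ := Int.fract (β * x)

/-- The survivor set `K_β(t) = {x ∈ [0,1) : T_β^n x ≥ t for all n ≥ 0}`. -/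
def Kset (β t : ℝ) : Set ℝ := {x | x ∈ Set.Ico (0 : ℝ) 1 ∧ ∀ n : ℕ, t ≤ (Tbeta β)^[n] x}

/-- Strict lexicographic order on sequences of naturals. -/
def seqLt (x y : ℕ → ℕ) : Prop := ∃ n, (∀ i, i < n → x i = y i) ∧ x n < y n

/-- Lexicographic order on sequences of naturals. -/
def seqLe (x y : ℕ → ℕ) : Prop := x = y ∨ seqLt x y

/-- The `n`-th iterate of the left shift. -/
def shiftN (n : ℕ) (x : ℕ → ℕ) : ℕ → ℕ := fun i => x (i + n)

/-- The sequence `w 0^∞`. -/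
def wordSeq (w : List ℕ) : ℕ → ℕ := fun i => w.getD i 0

/-- The periodic sequence `w^∞`. -/
def perSeq (w : List ℕ) : ℕ → ℕ := fun i => w.getD (i % w.length) 0

/-- The sequence obtained by concatenating the word `w` with the sequence `x`. -/
def catSeq (w : List ℕ) (x : ℕ → ℕ) : ℕ → ℕ :=
  fun i => if i < w.length then w.getD i 0 else x (i - w.length)

/-- The greedy β-expansion of `t`: the digit `b_{i+1}` is `⌊β T_β^i t⌋`. -/
noncomputable def greedy (β t : ℝ) : ℕ → ℕ := fun i => (⌊β * (Tbeta β)^[i] t⌋).toNat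

/-- `d` is the quasi-greedy β-expansion of `1`: the lexicographically largest
sequence in `{0,1}^ℕ` not ending in `0^∞` whose digits sum to `1` in base `β`. -/
def IsQuasiGreedy (β : ℝ) (d : ℕ → ℕ) : Prop :=
  (∀ i, d i ≤ 1) ∧ (¬ ∃ N, ∀ n, N ≤ n → d n = 0) ∧
  (∑' i : ℕ, (d i : ℝ) / β ^ (i + 1) = 1) ∧
  ∀ e : ℕ → ℕ, (∀ i, e i ≤ 1) → (¬ ∃ N, ∀ n, N ≤ n → e n = 0) →
    (∑' i : ℕ, (e i : ℝ) / β ^ (i + 1) = 1) → seqLe e d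

/-- `s = s_1…s_p` is a β-Lyndon word: `s_{i+1}…s_p ≻ s_1…s_{p-i}` for `1 ≤ i < p`
and `σ^n(s^∞) ≺ δ(β)` for all `n ≥ 0`. -/
def IsBetaLyndon (β : ℝ) (s : List ℕ) : Prop :=
  s ≠ [] ∧ (∀ a ∈ s, a ≤ 1) ∧
  (∀ i, 1 ≤ i → i < s.length →
    seqLt (wordSeq (s.take (s.length - i))) (wordSeq (s.drop i))) ∧
  (∀ d : ℕ → ℕ, IsQuasiGreedy β d → ∀ n : ℕ, seqLt (shiftN n (perSeq s)) d)

/-- Left endpoint `t_L = Σ_{i=1}^p s_i β^{-i}` of the β-Lyndon interval generated by `s`. -/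
noncomputable def lyndonLeft (β : ℝ) (s : List ℕ) : ℝ :=
  ∑ i ∈ Finset.range s.length, (s.getD i 0 : ℝ) / β ^ (i + 1)

/-- Right endpoint `t_R = (β^p/(β^p - 1)) t_L` of the β-Lyndon interval generated by `s`. -/
noncomputable def lyndonRight (β : ℝ) (s : List ℕ) : ℝ :=
  β ^ s.length / (β ^ s.length - 1) * lyndonLeft β s

/-- The union of all β-Lyndon intervals `[t_L, t_R)`. -/
noncomputable def lyndonUnionIco (β : ℝ) : Set ℝ :=
  ⋃ s ∈ {s : List ℕ | IsBetaLyndon β s}, Set.Ico (lyndonLeft β s) (lyndonRight β s)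

/-- The symbolic survivor set `K̃_β(t)` with upper bound sequence `d = δ(β)`. -/
def Ktilde (β t : ℝ) (d : ℕ → ℕ) : Set (ℕ → ℕ) :=
  {x | (∀ i, x i ≤ 1) ∧ ∀ n : ℕ, seqLe (greedy β t) (shiftN n x) ∧ seqLe (shiftN n x) d}

/-- The set-valued bifurcation set `E_β`. -/
def Eset (β : ℝ) : Set ℝ :=
  {t | t ∈ Set.Ico (0 : ℝ) 1 ∧ ∀ t', t < t' → t' < 1 → Kset β t' ≠ Kset β t}

/-- The dimension bifurcation set `B_β`. -/
def Bset (β : ℝ) : Set ℝ :=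
  {t | t ∈ Set.Ico (0 : ℝ) 1 ∧ ∀ t', t < t' → t' < 1 → dimH (Kset β t') ≠ dimH (Kset β t)}

/-- `β` is a multinacci number: `β^{m+1} = β^m + ⋯ + β + 1` for some `m ≥ 1`. -/
def IsMultinacci (β : ℝ) : Prop :=
  ∃ m : ℕ, 1 ≤ m ∧ β ^ (m + 1) = ∑ i ∈ Finset.range (m + 1), β ^ i

/-!
A digit sequence `b` with value `∑ bᵢ β⁻ⁱ < 1` lies strictly below `δ(β)`: otherwise the digits of
`b` up to the first place where it exceeds `δ(β)` leave a positive remainder that can be expanded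
again, and this would produce a non-terminating expansion of `1` larger than `δ(β)`. In particular
all greedy expansions of points of `[0, 1)` lie below `δ(β)`, for every `β ∈ (1, 2]`.

Since the iterates of `T_β` are right-continuous, `t ∈ E_β` exactly when the orbit of `t` never
drops below `t`, i.e. when the greedy expansion of `t` is at most each of its shifts. If this
expansion is periodic with minimal period `N`, a shift by `0 < i < N` is strictly larger, and the
first difference has to occur within the first `N - i` digits: otherwise cancelling these digits
would make the shift by `N - i` smaller than the expansion itself.
-/

open Topology

section LexicographicOrder

variable {x y : ℕ → ℕ}

lemma seqLt_iff_toLex_lt : seqLt x y ↔ toLex x < toLex y := Iff.rfl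

lemma seqLe_iff_toLex_le : seqLe x y ↔ toLex x ≤ toLex y :=
  (or_congr toLex_inj.symm seqLt_iff_toLex_lt).trans le_iff_eq_or_lt.symm

lemma not_seqLt : ¬ seqLt x y ↔ seqLe y x :=
  (not_lt (a := toLex x) (b := toLex y)).trans seqLe_iff_toLex_le.symm

end LexicographicOrder

section Words

variable {x y : ℕ → ℕ} {n N : ℕ}

/-- The word formed by the first `n` digits `x 0, …, x (n - 1)` of a sequence. -/
def initWord (x : ℕ → ℕ) (n : ℕ) : List ℕ := List.ofFn fun i : Fin n => x i

@[simp] lemma length_initWord (x : ℕ → ℕ) (n : ℕ) : (initWord x n).length = n :=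
  List.length_ofFn

lemma getD_initWord (x : ℕ → ℕ) (n i : ℕ) :
    (initWord x n).getD i 0 = if i < n then x i else 0 := by
  by_cases hi : i < n <;> simp [initWord, List.getD_eq_getElem?_getD, hi]

lemma take_initWord (x : ℕ → ℕ) (hn : n ≤ N) : (initWord x N).take n = initWord x n := by
  apply List.ext_getElem <;> simp [initWord, hn]

lemma drop_initWord (x : ℕ → ℕ) (n N : ℕ) :
    (initWord x N).drop n = initWord (shiftN n x) (N - n) := by
  apply List.ext_getElem <;> simp [initWord, shiftN, add_comm]

lemma perSeq_initWord (hN : 0 < N) (hper : shiftN N x = x) : perSeq (initWord x N) = x := by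
  have hperiodic : Function.Periodic x N := congrFun hper
  funext i
  simp only [perSeq, length_initWord, getD_initWord, Nat.mod_lt i hN, if_true]
  exact hperiodic.map_mod_nat i

lemma catSeq_initWord_of_lt (y : ℕ → ℕ) {i : ℕ} (hi : i < n) :
    catSeq (initWord x n) y i = x i := by
  simp only [catSeq, length_initWord, getD_initWord, hi, if_true]

lemma catSeq_initWord_le {M : ℕ} (hx : ∀ i, x i ≤ M) (hy : ∀ i, y i ≤ M) (i : ℕ) :
    catSeq (initWord x n) y i ≤ M := by
  by_cases hi : i < n
  · exact (catSeq_initWord_of_lt y hi).trans_le (hx i)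
  · simpa only [catSeq, length_initWord, hi, if_false] using hy (i - n)

lemma shiftN_catSeq_initWord (x y : ℕ → ℕ) (n : ℕ) :
    shiftN n (catSeq (initWord x n) y) = y := by
  funext i
  simp [shiftN, catSeq]

lemma seqLt.wordSeq_initWord (hxy : seqLt x y) (hn : ¬ seqLt (shiftN n x) (shiftN n y)) :
    seqLt (wordSeq (initWord x n)) (wordSeq (initWord y n)) := by
  obtain ⟨k, hagree, hlt⟩ := hxy
  have hkn : k < n := by
    by_contra! hnk
    refine hn ⟨k - n, fun i hi => hagree (i + n) (by omega), ?_⟩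
    simpa only [shiftN, Nat.sub_add_cancel hnk] using hlt
  refine ⟨k, fun i hi => ?_, ?_⟩
  · simp only [wordSeq, getD_initWord, hi.trans hkn, if_true, hagree i hi]
  · simpa only [wordSeq, getD_initWord, hkn, if_true] using hlt

lemma seqLt_take_drop_initWord {i : ℕ} (hper : shiftN N x = x)
    (hmin : ∀ k, seqLe x (shiftN k x)) (hne : shiftN i x ≠ x) (hiN : i ≤ N) :
    seqLt (wordSeq ((initWord x N).take (N - i))) (wordSeq ((initWord x N).drop i)) := by
  rw [take_initWord x (Nat.sub_le N i), drop_initWord]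
  have hlt : seqLt x (shiftN i x) := (hmin i).resolve_left hne.symm
  refine hlt.wordSeq_initWord (not_seqLt.2 ?_)
  have hshift : shiftN (N - i) (shiftN i x) = x := by
    refine Eq.trans (funext fun j => congrArg x ?_) hper
    omega
  rw [hshift]
  exact hmin (N - i)

end Words

section BetaValue

variable {β C : ℝ} {x y : ℕ → ℕ} {M N : ℕ}

/-- The number `∑ xᵢ β⁻ⁱ` represented in base `β` by the digits `x 0, x 1, …`; as a `tsum` it is
meaningful only for summable series, in particular for bounded digits and `1 < β`. -/
noncomputable def betaValue (β : ℝ) (x : ℕ → ℕ) : ℝ := ∑' i, (x i : ℝ) / β ^ (i + 1)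

lemma hasSum_const_div_pow_succ (hβ : 1 < β) (C : ℝ) :
    HasSum (fun i : ℕ => C / β ^ (i + 1)) (C / (β - 1)) := by
  have hβ0 : 0 < β := one_pos.trans hβ
  have hgeom := (hasSum_geometric_of_lt_one (inv_nonneg.2 hβ0.le)
    (inv_lt_one_of_one_lt₀ hβ)).mul_left (C / β)
  have hlim : C / β * (1 - β⁻¹)⁻¹ = C / (β - 1) := by
    have : β - 1 ≠ 0 := by linarith
    field_simp
  rw [hlim] at hgeom
  refine hgeom.congr_fun fun i => ?_
  rw [inv_pow, pow_succ]
  field_simp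

lemma summable_digit_div_pow (hβ : 1 < β) (hx : ∀ i, x i ≤ M) :
    Summable fun i => (x i : ℝ) / β ^ (i + 1) := by
  have : 0 < β := one_pos.trans hβ
  refine (hasSum_const_div_pow_succ hβ M).summable.of_nonneg_of_le (fun i => by positivity)
    fun i => ?_
  gcongr
  exact hx i

lemma betaValue_nonneg (hβ : 0 ≤ β) (x : ℕ → ℕ) : 0 ≤ betaValue β x :=
  tsum_nonneg fun i => by positivity

lemma betaValue_le (hβ : 1 < β) (hx : ∀ i, x i ≤ M) : betaValue β x ≤ M / (β - 1) := by
  have : 0 < β := one_pos.trans hβ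
  refine hasSum_le (fun i => ?_) (summable_digit_div_pow hβ hx).hasSum
    (hasSum_const_div_pow_succ hβ M)
  gcongr
  exact hx i

lemma betaValue_eq_sum_add (hβ : 1 < β) (hx : ∀ i, x i ≤ M) (n : ℕ) :
    betaValue β x =
      ∑ i ∈ Finset.range n, (x i : ℝ) / β ^ (i + 1) + betaValue β (shiftN n x) / β ^ n := by
  rw [betaValue, ← (summable_digit_div_pow hβ hx).sum_add_tsum_nat_add n, betaValue,
    ← tsum_div_const]
  congr 2
  funext i
  rw [shiftN, div_div, ← pow_add, add_right_comm]

lemma betaValue_catSeq_initWord (hβ : 1 < β) (hx : ∀ i, x i ≤ M) (hy : ∀ i, y i ≤ M) (n : ℕ) :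
    betaValue β (catSeq (initWord x n) y) =
      ∑ i ∈ Finset.range n, (x i : ℝ) / β ^ (i + 1) + betaValue β y / β ^ n := by
  rw [betaValue_eq_sum_add hβ (catSeq_initWord_le hx hy) n, shiftN_catSeq_initWord]
  congr 1
  exact Finset.sum_congr rfl fun i hi => by rw [catSeq_initWord_of_lt y (Finset.mem_range.1 hi)]

lemma sum_add_of_remainder (hβ : β ≠ 0) {r : ℕ → ℝ} (hr : ∀ n, β * r n = x n + r (n + 1)) (n : ℕ) :
    ∑ i ∈ Finset.range n, (x i : ℝ) / β ^ (i + 1) + r n / β ^ n = r 0 := by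
  induction n with
  | zero => simp
  | succ n ih =>
    rw [Finset.sum_range_succ, add_assoc, ← add_div, ← hr, pow_succ', mul_div_mul_left _ _ hβ, ih]

lemma betaValue_of_remainder (hβ : 1 < β) {r : ℕ → ℝ} (hr : ∀ n, β * r n = x n + r (n + 1))
    (hC : ∀ n, |r n| ≤ C) : betaValue β x = r 0 := by
  have hβ0 : 0 < β := one_pos.trans hβ
  have hvanish : Tendsto (fun n => r n / β ^ n) atTop (𝓝 0) := by
    refine squeeze_zero_norm (fun n => ?_)
      ((tendsto_pow_atTop_atTop_of_one_lt hβ).const_div_atTop C)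
    rw [Real.norm_eq_abs, abs_div, abs_of_pos (pow_pos hβ0 n)]
    gcongr
    exact hC n
  refine ((hasSum_iff_tendsto_nat_of_nonneg (fun i => by positivity) _).2 ?_).tsum_eq
  have hsum : (fun n => ∑ i ∈ Finset.range n, (x i : ℝ) / β ^ (i + 1)) =
      fun n => r 0 - r n / β ^ n :=
    funext fun n => eq_sub_of_add_eq (sum_add_of_remainder hβ0.ne' hr n)
  simpa only [hsum, sub_zero] using hvanish.const_sub (r 0)

lemma betaValue_eq_lyndonRight (hβ : 1 < β) (hx : ∀ i, x i ≤ M) (hN : 0 < N)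
    (hper : shiftN N x = x) : betaValue β x = lyndonRight β (initWord x N) := by
  have hleft : lyndonLeft β (initWord x N) = ∑ i ∈ Finset.range N, (x i : ℝ) / β ^ (i + 1) := by
    rw [lyndonLeft, length_initWord]
    refine Finset.sum_congr rfl fun i hi => ?_
    rw [getD_initWord, if_pos (Finset.mem_range.1 hi)]
  have hsplit := betaValue_eq_sum_add hβ hx N
  rw [hper, ← hleft] at hsplit
  have hpow : 1 < β ^ N := one_lt_pow₀ hβ hN.ne'
  have hpow_sub : β ^ N - 1 ≠ 0 := by linarith
  have hpow_ne : β ^ N ≠ 0 := by linarith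
  rw [lyndonRight, length_initWord]
  field_simp at hsplit ⊢
  linarith

end BetaValue

section LazyExpansion

variable {β x : ℝ}

/-- The lazy digit of `x` in base `β`: it is `1` only if `βx` exceeds `1 / (β - 1)`, the largest
number with an expansion over the digits `0` and `1`. -/
noncomputable def lazyDigit (β x : ℝ) : ℕ := if β * x ≤ 1 / (β - 1) then 0 else 1

/-- The map `x ↦ βx - d`, with `d` the lazy digit of `x`. -/
noncomputable def lazyMap (β x : ℝ) : ℝ := β * x - lazyDigit β x

/-- The lazy expansion of `x` in base `β`, which never terminates, unlike the greedy one. -/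
noncomputable def lazyExpansion (β x : ℝ) : ℕ → ℕ := fun i => lazyDigit β ((lazyMap β)^[i] x)

lemma lazyExpansion_le_one (β x : ℝ) (i : ℕ) : lazyExpansion β x i ≤ 1 := by
  unfold lazyExpansion lazyDigit
  split_ifs <;> simp

lemma mapsTo_lazyMap (hβ : β ∈ Ioc (1 : ℝ) 2) :
    MapsTo (lazyMap β) (Ioc 0 (1 / (β - 1))) (Ioc 0 (1 / (β - 1))) := by
  rintro x ⟨hx0, hx1⟩
  have hβ1 : 0 < β - 1 := sub_pos.2 hβ.1
  have hβ0 : 0 < β := one_pos.trans hβ.1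
  rw [lazyMap, lazyDigit]
  split_ifs with h
  · rw [Nat.cast_zero, sub_zero]
    exact ⟨mul_pos hβ0 hx0, h⟩
  · have hone : 1 ≤ 1 / (β - 1) := one_le_one_div hβ1 (by linarith [hβ.2])
    have hupper : β * x ≤ β * (1 / (β - 1)) := by gcongr
    have hfixed : β * (1 / (β - 1)) - 1 = 1 / (β - 1) := by field_simp; ring
    push_cast
    exact ⟨by linarith, by linarith⟩

lemma betaValue_lazyExpansion (hβ : β ∈ Ioc (1 : ℝ) 2) (hx : x ∈ Ioc 0 (1 / (β - 1))) :
    betaValue β (lazyExpansion β x) = x := by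
  have horbit : ∀ n, (lazyMap β)^[n] x ∈ Ioc 0 (1 / (β - 1)) := fun n =>
    (mapsTo_lazyMap hβ).iterate n hx
  refine betaValue_of_remainder (r := fun n => (lazyMap β)^[n] x) (C := 1 / (β - 1)) hβ.1
    (fun n => ?_) fun n => ?_
  · simp only [Function.iterate_succ_apply', lazyMap, lazyExpansion]
    ring
  · rw [abs_of_pos (horbit n).1]
    exact (horbit n).2

lemma not_eventually_zero_lazyExpansion (hβ : β ∈ Ioc (1 : ℝ) 2)
    (hx : x ∈ Ioc 0 (1 / (β - 1))) : ¬ ∃ N, ∀ n, N ≤ n → lazyExpansion β x n = 0 := by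
  rintro ⟨N, hN⟩
  have hmem := (mapsTo_lazyMap hβ).iterate N hx
  have hzero : lazyExpansion β ((lazyMap β)^[N] x) = 0 := by
    funext i
    rw [lazyExpansion, ← Function.iterate_add_apply]
    exact hN (i + N) (Nat.le_add_left N i)
  have hvalue := betaValue_lazyExpansion hβ hmem
  rw [hzero] at hvalue
  exact hmem.1.ne (by simpa [betaValue] using hvalue)

end LazyExpansion

section QuasiGreedyExpansion

variable {β : ℝ} {x y d : ℕ → ℕ}

lemma exists_seqLt_betaValue_eq (hβ : β ∈ Ioc (1 : ℝ) 2) (hx : ∀ i, x i ≤ 1) (hy : ∀ i, y i ≤ 1)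
    (hxy : seqLt x y) (hvalue : betaValue β y < betaValue β x) :
    ∃ e : ℕ → ℕ, seqLt x e ∧ (∀ i, e i ≤ 1) ∧ (¬ ∃ N, ∀ n, N ≤ n → e n = 0) ∧
      betaValue β e = betaValue β x := by
  obtain ⟨n, hagree, hlt⟩ := hxy
  have hsum : ∑ i ∈ Finset.range (n + 1), (y i : ℝ) / β ^ (i + 1) =
      ∑ i ∈ Finset.range (n + 1), (x i : ℝ) / β ^ (i + 1) + 1 / β ^ (n + 1) := by
    have hxn : x n = 0 := by have := hy n; omega
    have hyn : y n = 1 := by have := hy n; omega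
    rw [Finset.sum_range_succ, Finset.sum_range_succ, hxn, hyn,
      Finset.sum_congr rfl fun i hi => by rw [← hagree i (Finset.mem_range.1 hi)]]
    simp
  have hxsplit := betaValue_eq_sum_add hβ.1 hx (n + 1)
  have hysplit := betaValue_eq_sum_add hβ.1 hy (n + 1)
  -- The remainder to be expanded after replacing the first `n + 1` digits of `x` by those of `y`.
  set ρ := betaValue β (shiftN (n + 1) x) - 1 with hρ
  have hρ_mem : ρ ∈ Ioc 0 (1 / (β - 1)) := by
    have hβ0 : 0 < β := one_pos.trans hβ.1
    have hlower : betaValue β (shiftN (n + 1) y) < ρ := by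
      rw [← div_lt_div_iff_of_pos_right (pow_pos hβ0 (n + 1)), hρ, sub_div]
      linarith
    have hupper : betaValue β (shiftN (n + 1) x) ≤ (1 : ℕ) / (β - 1) :=
      betaValue_le hβ.1 fun i => hx _
    rw [Nat.cast_one] at hupper
    exact ⟨(betaValue_nonneg hβ0.le _).trans_lt hlower, by linarith⟩
  refine ⟨catSeq (initWord y (n + 1)) (lazyExpansion β ρ), ⟨n, fun i hi => ?_, ?_⟩,
    catSeq_initWord_le hy (lazyExpansion_le_one β ρ), ?_, ?_⟩
  · rw [catSeq_initWord_of_lt _ (by omega), hagree i hi]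
  · rwa [catSeq_initWord_of_lt _ n.lt_succ_self]
  · rintro ⟨N, hN⟩
    refine not_eventually_zero_lazyExpansion hβ hρ_mem ⟨N, fun i hi => ?_⟩
    rw [← shiftN_catSeq_initWord y (lazyExpansion β ρ) (n + 1)]
    exact hN _ (by omega)
  · rw [betaValue_catSeq_initWord hβ.1 hy (lazyExpansion_le_one β ρ),
      betaValue_lazyExpansion hβ hρ_mem, hxsplit, hsum, hρ, sub_div]
    ring

lemma IsQuasiGreedy.seqLt_of_betaValue_lt_one (hβ : β ∈ Ioc (1 : ℝ) 2) (hd : IsQuasiGreedy β d)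
    (hx : ∀ i, x i ≤ 1) (hvalue : betaValue β x < 1) : seqLt x d := by
  obtain ⟨hd1, -, hdvalue, hdmax⟩ := hd
  change betaValue β d = 1 at hdvalue
  by_contra hxd
  rcases not_seqLt.1 hxd with rfl | hdx
  · exact hvalue.ne hdvalue
  · obtain ⟨e, hde, he1, he0, hevalue⟩ :=
      exists_seqLt_betaValue_eq hβ hd1 hx hdx (hdvalue ▸ hvalue)
    exact not_seqLt.2 (hdmax e he1 he0 (hevalue.trans hdvalue)) hde

end QuasiGreedyExpansion

section GreedyExpansion

variable {β x y : ℝ}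

lemma iterate_Tbeta_mem_Ico (β : ℝ) (hx : x ∈ Ico (0 : ℝ) 1) (n : ℕ) :
    (Tbeta β)^[n] x ∈ Ico (0 : ℝ) 1 :=
  MapsTo.iterate (f := Tbeta β) (s := Ico 0 1)
    (fun y _ => ⟨Int.fract_nonneg (β * y), Int.fract_lt_one _⟩) n hx

lemma mul_iterate_Tbeta (hβ : 0 ≤ β) (hx : x ∈ Ico (0 : ℝ) 1) (n : ℕ) :
    β * (Tbeta β)^[n] x = greedy β x n + (Tbeta β)^[n + 1] x := by
  have hnonneg : 0 ≤ β * (Tbeta β)^[n] x := mul_nonneg hβ (iterate_Tbeta_mem_Ico β hx n).1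
  rw [greedy, Int.floor_toNat, natCast_floor_eq_intCast_floor hnonneg,
    Function.iterate_succ_apply', Tbeta, Int.floor_add_fract]

lemma greedy_le_one (hβ : β ∈ Ioc (0 : ℝ) 2) (hx : x ∈ Ico (0 : ℝ) 1) (n : ℕ) :
    greedy β x n ≤ 1 := by
  have horbit := iterate_Tbeta_mem_Ico β hx n
  have hlt : β * (Tbeta β)^[n] x < 2 := by nlinarith [hβ.1, hβ.2, horbit.1, horbit.2]
  have hfloor : ⌊β * (Tbeta β)^[n] x⌋ < 2 := Int.floor_lt.2 (by exact_mod_cast hlt)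
  rw [greedy]
  omega

lemma greedy_iterate_Tbeta (β x : ℝ) (n : ℕ) :
    greedy β ((Tbeta β)^[n] x) = shiftN n (greedy β x) := by
  funext i
  simp only [greedy, shiftN, ← Function.iterate_add_apply]

lemma betaValue_greedy (hβ : 1 < β) (hx : x ∈ Ico (0 : ℝ) 1) : betaValue β (greedy β x) = x := by
  refine betaValue_of_remainder (r := fun n => (Tbeta β)^[n] x) (C := 1) hβ
    (mul_iterate_Tbeta (one_pos.trans hβ).le hx) fun n => ?_
  obtain ⟨hnonneg, hlt⟩ := iterate_Tbeta_mem_Ico β hx n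
  rw [abs_of_nonneg hnonneg]
  exact hlt.le

lemma lt_of_seqLt_greedy (hβ : 0 < β) (hx : x ∈ Ico (0 : ℝ) 1) (hy : y ∈ Ico (0 : ℝ) 1)
    (h : seqLt (greedy β x) (greedy β y)) : x < y := by
  obtain ⟨n, hagree, hlt⟩ := h
  have horbit : (Tbeta β)^[n] x < (Tbeta β)^[n] y := by
    by_contra! hle
    refine hlt.not_ge (Int.toNat_le_toNat (Int.floor_le_floor ?_))
    gcongr
  have hxsum := sum_add_of_remainder hβ.ne' (mul_iterate_Tbeta hβ.le hx) n
  have hysum := sum_add_of_remainder hβ.ne' (mul_iterate_Tbeta hβ.le hy) n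
  rw [Finset.sum_congr rfl fun i hi => by rw [hagree i (Finset.mem_range.1 hi)]] at hxsum
  calc x = _ := hxsum.symm
    _ < _ := by gcongr
    _ = y := hysum

lemma seqLe_greedy_of_le (hβ : 0 < β) (hx : x ∈ Ico (0 : ℝ) 1) (hy : y ∈ Ico (0 : ℝ) 1)
    (hxy : x ≤ y) : seqLe (greedy β x) (greedy β y) :=
  not_seqLt.1 fun h => (lt_of_seqLt_greedy hβ hy hx h).not_ge hxy

lemma IsQuasiGreedy.greedy_seqLt {d : ℕ → ℕ} (hβ : β ∈ Ioc (1 : ℝ) 2) (hd : IsQuasiGreedy β d)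
    (hx : x ∈ Ico (0 : ℝ) 1) : seqLt (greedy β x) d :=
  hd.seqLt_of_betaValue_lt_one hβ (greedy_le_one ⟨one_pos.trans hβ.1, hβ.2⟩ hx)
    ((betaValue_greedy hβ.1 hx).trans_lt hx.2)

end GreedyExpansion

section BifurcationSet

variable {β t : ℝ}

lemma tendsto_fract_nhdsGE (x : ℝ) : Tendsto (Int.fract : ℝ → ℝ) (𝓝[≥] x) (𝓝[≥] (Int.fract x)) := by
  have hlocal : ∀ᶠ z : ℝ in 𝓝[≥] x, z - ⌊x⌋ = Int.fract z := by
    filter_upwards [tendsto_pure.1 (tendsto_floor_right_pure_floor x)] with z hz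
    rw [← hz, Int.self_sub_floor]
  have hshift : ContinuousWithinAt (fun z : ℝ => z - ⌊x⌋) (Ici x) x := by fun_prop
  refine (hshift.tendsto_nhdsWithin fun z hz => ?_).congr' hlocal
  exact sub_le_sub_right (mem_Ici.1 hz) _

lemma tendsto_iterate_Tbeta_nhdsGE (hβ : 0 ≤ β) (x : ℝ) (n : ℕ) :
    Tendsto (Tbeta β)^[n] (𝓝[≥] x) (𝓝[≥] ((Tbeta β)^[n] x)) := by
  have hTbeta : ∀ y, Tendsto (Tbeta β) (𝓝[≥] y) (𝓝[≥] (Tbeta β y)) := fun y =>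
    (tendsto_fract_nhdsGE (β * y)).comp <| ContinuousWithinAt.tendsto_nhdsWithin (by fun_prop)
      fun z hz => mul_le_mul_of_nonneg_left hz hβ
  induction n with
  | zero => exact tendsto_id
  | succ n ih =>
    rw [Function.iterate_succ', Function.comp_apply]
    exact (hTbeta _).comp ih

lemma mem_Eset_iff (hβ : 0 ≤ β) : t ∈ Eset β ↔ t ∈ Kset β t := by
  constructor
  · rintro ⟨ht, hne⟩
    refine ⟨ht, fun n => ?_⟩
    by_contra! hlt
    have hnhds : ∀ᶠ z in 𝓝[≥] t, (Tbeta β)^[n] z < t :=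
      (tendsto_iterate_Tbeta_nhdsGE hβ t n).eventually
        (mem_nhdsWithin_of_mem_nhds (Iio_mem_nhds hlt))
    obtain ⟨u, htu, hu1⟩ := exists_between ht.2
    obtain ⟨t', ⟨htt', ht'u⟩, hdrop⟩ := (mem_nhdsGE_iff_exists_mem_Ioc_Ico_subset htu).1 hnhds
    refine hne t' htt' (ht'u.trans_lt hu1) (Subset.antisymm ?_ ?_)
    · exact fun x ⟨hx, hge⟩ => ⟨hx, fun k => htt'.le.trans (hge k)⟩
    · rintro x ⟨hx, hge⟩
      refine ⟨hx, fun k => ?_⟩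
      -- An orbit entering `[t, t')` would be below `t` after `n` more steps.
      by_contra! hk
      refine (hge (n + k)).not_gt ?_
      rw [Function.iterate_add_apply]
      exact hdrop ⟨hge k, hk⟩
  · refine fun ht => ⟨ht.1, fun t' htt' _ heq => htt'.not_ge ?_⟩
    rw [← heq] at ht
    exact ht.2 0

lemma seqLe_greedy_shiftN_of_mem_Kset (hβ : 0 < β) (ht : t ∈ Kset β t) (n : ℕ) :
    seqLe (greedy β t) (shiftN n (greedy β t)) := by
  rw [← greedy_iterate_Tbeta]
  exact seqLe_greedy_of_le hβ ht.1 (iterate_Tbeta_mem_Ico β ht.1 n) (ht.2 n)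

end BifurcationSet

lemma isBetaLyndon_initWord {β : ℝ} {x : ℕ → ℕ} {N : ℕ} (hx : ∀ i, x i ≤ 1) (hN : 0 < N)
    (hper : shiftN N x = x) (hminN : ∀ k, 0 < k → k < N → shiftN k x ≠ x)
    (hle : ∀ k, seqLe x (shiftN k x))
    (hlt : ∀ d, IsQuasiGreedy β d → ∀ k, seqLt (shiftN k x) d) :
    IsBetaLyndon β (initWord x N) := by
  refine ⟨?_, ?_, ?_, ?_⟩
  · exact List.ne_nil_of_length_pos (by rwa [length_initWord])
  · exact List.forall_mem_ofFn_iff.2 fun i => hx i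
  · rw [length_initWord]
    exact fun i hi hiN => seqLt_take_drop_initWord hper hle (hminN i hi hiN) hiN.le
  · rwa [perSeq_initWord hN hper]

theorem stmt_15_general {β : ℝ} (hβ : β ∈ Ioc (1 : ℝ) 2) {t : ℝ} (ht : t ∈ Eset β) {N : ℕ}
    (hN : 0 < N) (hper : shiftN N (greedy β t) = greedy β t)
    (hminN : ∀ k, 0 < k → k < N → shiftN k (greedy β t) ≠ greedy β t) :
    IsBetaLyndon β (initWord (greedy β t) N) ∧
      t = lyndonRight β (initWord (greedy β t) N) := by
  have hβ0 : 0 < β := one_pos.trans hβ.1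
  have ht_survives : t ∈ Kset β t := (mem_Eset_iff hβ0.le).1 ht
  have hdigit : ∀ i, greedy β t i ≤ 1 := greedy_le_one ⟨hβ0, hβ.2⟩ ht.1
  constructor
  · refine isBetaLyndon_initWord hdigit hN hper hminN
      (seqLe_greedy_shiftN_of_mem_Kset hβ0 ht_survives) fun d hd k => ?_
    rw [← greedy_iterate_Tbeta]
    exact hd.greedy_seqLt hβ (iterate_Tbeta_mem_Ico β ht.1 k)
  · rw [← betaValue_eq_lyndonRight hβ.1 hdigit hN hper, betaValue_greedy hβ.1 ht.1]

/-- Let `β ∈ (1,2)` with `δ(β) = (1^m 0)^∞` for some `m ≥ 1`, and let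
`t ∈ E_β` have periodic greedy β-expansion `(t_i)` with minimal period `N`. Then
`t_1…t_N` is a β-Lyndon word and `t` is the right endpoint of the β-Lyndon interval
it generates. -/
theorem stmt_15 (β : ℝ) (hβ : β ∈ Set.Ioo (1 : ℝ) 2) (m : ℕ) (hm : 1 ≤ m)
    (hδ : IsQuasiGreedy β (perSeq (List.replicate m 1 ++ [0])))
    (t : ℝ) (ht : t ∈ Eset β)
    (N : ℕ) (hN : 0 < N) (hper : shiftN N (greedy β t) = greedy β t)
    (hminN : ∀ k, 0 < k → k < N → shiftN k (greedy β t) ≠ greedy β t)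
    (w : List ℕ) (hw : w = List.ofFn fun i : Fin N => greedy β t i) :
    IsBetaLyndon β w ∧ t = lyndonRight β w := by
  subst hw
  exact stmt_15_general ⟨hβ.1, hβ.2.le⟩ ht hN hper hminN
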